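/- arXiv:math-ph/0612083 — 3 statements merged into one kernel-verified Lean document; each statement's English description precedes it below -/
import Mathlib

section
/- The asymptotic growth constant z := lim_{n→∞} (2 ln f(n)) / (3 (3^n + 1)) satisfies 1.24733719931 < z < 1.24733719932. -/
open Filter

open scoped Nat Topology

/-!
Let `f` be the number of spanning forests, `s` the number of those joining two given outer
vertices, and `v = f - s`. Gluing three copies of the gasket closes a cycle exactly when each copy
joins its two gluing vertices, so `f (n + 1) = f n ^ 3 - s n ^ 3`; moreover
`v n ^ 3 ≤ v (n + 1)`. Hence `log (f n) / 3 ^ n` decreases, `log (v n) / 3 ^ n` increases, and the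
two enclose the limit. The enclosure closes very fast because
`f n ^ 3 - 3 * f n * s n ^ 2 ≤ v (n + 1)` and `s n / f n` is roughly squared at each step: the
first eleven digits of `f 5` already determine the growth constant to the required precision.
-/

section Limits

theorem antitone_log_div_pow {u : ℕ → ℝ} {k : ℕ} (hk : 0 < k) (hu : ∀ n, 0 < u n)
    (hle : ∀ n, u (n + 1) ≤ u n ^ k) : Antitone fun n => Real.log (u n) / (k : ℝ) ^ n := by
  refine antitone_nat_of_succ_le fun n => ?_
  have hlog : Real.log (u (n + 1)) ≤ k * Real.log (u n) :=
    (Real.log_le_log (hu _) (hle n)).trans_eq (Real.log_pow _ _)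
  rw [div_le_div_iff₀ (by positivity) (by positivity), pow_succ]
  calc Real.log (u (n + 1)) * (k : ℝ) ^ n ≤ k * Real.log (u n) * (k : ℝ) ^ n := by gcongr
    _ = Real.log (u n) * ((k : ℝ) ^ n * k) := by ring

theorem monotone_log_div_pow {v : ℕ → ℝ} {k : ℕ} (hk : 0 < k) (hv : ∀ n, 0 < v n)
    (hle : ∀ n, v n ^ k ≤ v (n + 1)) : Monotone fun n => Real.log (v n) / (k : ℝ) ^ n := by
  have hanti : Antitone fun n => Real.log (v n)⁻¹ / (k : ℝ) ^ n :=
    antitone_log_div_pow hk (fun n => inv_pos.2 (hv n)) fun n => by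
      rw [inv_pow]
      exact inv_anti₀ (pow_pos (hv n) k) (hle n)
  simpa only [Real.log_inv, neg_div, neg_neg] using hanti.neg

theorem exists_tendsto_log_div_pow {u v : ℕ → ℝ} {k : ℕ} (hk : 0 < k) (hv : ∀ n, 0 < v n)
    (hvu : ∀ n, v n ≤ u n) (hu_succ : ∀ n, u (n + 1) ≤ u n ^ k)
    (hv_succ : ∀ n, v n ^ k ≤ v (n + 1)) :
    ∃ L : ℝ, Tendsto (fun n => Real.log (u n) / (k : ℝ) ^ n) atTop (𝓝 L) ∧
      ∀ n, L ∈ Set.Icc (Real.log (v n) / (k : ℝ) ^ n) (Real.log (u n) / (k : ℝ) ^ n) := by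
  have hanti := antitone_log_div_pow hk (fun n => (hv n).trans_le (hvu n)) hu_succ
  have hmono := monotone_log_div_pow hk hv hv_succ
  have hle : (fun n => Real.log (v n) / (k : ℝ) ^ n) ≤ fun n => Real.log (u n) / (k : ℝ) ^ n :=
    fun n => div_le_div_of_nonneg_right (Real.log_le_log (hv n) (hvu n)) (by positivity)
  have hmem := hmono.ciSup_mem_iInter_Icc_of_antitone hanti hle
  have hbdd : BddBelow (Set.range fun n => Real.log (u n) / (k : ℝ) ^ n) :=
    ⟨_, Set.forall_mem_range.2 fun n => (Set.mem_iInter.1 hmem n).2⟩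
  refine ⟨_, tendsto_atTop_ciInf hanti hbdd, fun n => ⟨?_, ciInf_le hbdd n⟩⟩
  exact (Set.mem_iInter.1 hmem n).1.trans (le_ciInf fun m => (Set.mem_iInter.1 hmem m).2)

theorem tendsto_div_pow_add_one {a : ℕ → ℝ} {k L : ℝ} (hk : 1 < k)
    (h : Tendsto (fun n => a n / k ^ n) atTop (𝓝 L)) :
    Tendsto (fun n => a n / (k ^ n + 1)) atTop (𝓝 L) := by
  have hk₀ : 0 < k := one_pos.trans hk
  have hinv : Tendsto (fun n : ℕ => 1 + k⁻¹ ^ n) atTop (𝓝 1) := by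
    simpa using (tendsto_pow_atTop_nhds_zero_of_lt_one (inv_nonneg.2 hk₀.le)
      (inv_lt_one_of_one_lt₀ hk)).const_add 1
  have hquot := h.div hinv one_ne_zero
  rw [div_one] at hquot
  refine hquot.congr fun n => ?_
  simp only [Pi.div_apply, inv_pow]
  field_simp

end Limits

section ExponentialBounds

theorem pow_mul_sum_le_exp_add {a x : ℝ} (ha₀ : 0 ≤ a) (ha : a ≤ Real.exp 1) (hx : 0 ≤ x)
    (m n : ℕ) : a ^ m * ∑ i ∈ Finset.range n, x ^ i / i ! ≤ Real.exp (m + x) := by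
  rw [Real.exp_add, ← Real.exp_one_pow]
  gcongr
  exact Real.sum_le_exp_of_nonneg hx n

theorem exp_add_le_pow_mul_sum {b x : ℝ} (hb : Real.exp 1 ≤ b) (hx₀ : 0 ≤ x) (hx₁ : x ≤ 1)
    (m : ℕ) {n : ℕ} (hn : 0 < n) :
    Real.exp (m + x) ≤
      b ^ m * (∑ i ∈ Finset.range n, x ^ i / i ! + x ^ n * (n + 1) / (n ! * n)) := by
  have hb₀ : 0 ≤ b := (Real.exp_pos 1).le.trans hb
  rw [Real.exp_add, ← Real.exp_one_pow]
  gcongr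
  exact Real.exp_bound' hx₀ hx₁ hn

-- The next two bounds are `3 ^ 6 / 2` times those on the growth constant; the arguments of the
-- logarithm are `f 5` rounded down and up to eleven digits.
set_option exponentiation.threshold 500 in
theorem lt_log_28438132030_mul_ten_pow_187 :
    (454.654409148495 : ℝ) < Real.log (28438132030 * 10 ^ 187) := by
  have he := sub_le_iff_le_add.1 (abs_sub_le_iff.1 Real.exp_one_near_20).1
  have hexp := exp_add_le_pow_mul_sum he (x := 0.654409148495) (by norm_num) (by norm_num) 454
    (n := 16) (by norm_num)
  rw [Real.lt_log_iff_exp_lt (by norm_num)]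
  calc Real.exp 454.654409148495 = Real.exp ((454 : ℕ) + 0.654409148495) := by norm_num
    _ < 28438132030 * 10 ^ 187 :=
      hexp.trans_lt (by norm_num [Finset.sum_range_succ, Nat.factorial])

set_option exponentiation.threshold 500 in
theorem log_28438132031_mul_ten_pow_187_lt :
    Real.log (28438132031 * 10 ^ 187) < (454.65440915214 : ℝ) := by
  have he := sub_le_comm.1 (abs_sub_le_iff.1 Real.exp_one_near_20).2
  have hexp := pow_mul_sum_le_exp_add (by norm_num) he (x := 0.65440915214) (by norm_num) 454 16
  rw [Real.log_lt_iff_lt_exp (by norm_num)]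
  calc (28438132031 * 10 ^ 187 : ℝ) < Real.exp ((454 : ℕ) + 0.65440915214) :=
      lt_of_lt_of_le (by norm_num [Finset.sum_range_succ, Nat.factorial]) hexp
    _ = Real.exp 454.65440915214 := by norm_num

end ExponentialBounds

/-- The recursion for spanning forests of the Sierpinski gasket `SG_2`, sorted by how they connect
the three outer vertices: `t` counts the forests joining all three, `g` those joining exactly one
prescribed pair, `h` those joining none. The initial values are left free. -/
structure GasketForestRecursion (t g h : ℕ → ℕ) : Prop where
  t_succ (n : ℕ) : t (n + 1) = 6 * t n ^ 2 * g n + 3 * t n * g n ^ 2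
  g_succ (n : ℕ) : g (n + 1) = t n ^ 2 * h n + 2 * t n * g n * h n + 7 * t n * g n ^ 2
    + 4 * g n ^ 3 + g n ^ 2 * h n
  h_succ (n : ℕ) : h (n + 1) = 12 * t n * g n * h n + 14 * g n ^ 3 + 24 * g n ^ 2 * h n
    + 9 * g n * h n ^ 2 + 3 * t n * h n ^ 2 + h n ^ 3

namespace GasketForestRecursion

/-- The number `f` of all spanning forests; the factor `3` is the number of pairs of outer
vertices. -/
def total (t g h : ℕ → ℕ) (n : ℕ) : ℕ := t n + 3 * g n + h n

/-- The number `s` of spanning forests that join two given outer vertices. -/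
def joined (t g : ℕ → ℕ) (n : ℕ) : ℕ := t n + g n

/-- The number `v` of spanning forests that separate two given outer vertices. -/
def separated (g h : ℕ → ℕ) (n : ℕ) : ℕ := 2 * g n + h n

variable {t g h : ℕ → ℕ}

theorem joined_add_separated (t g h : ℕ → ℕ) (n : ℕ) :
    joined t g n + separated g h n = total t g h n := by
  simp only [joined, separated, total]
  ring

theorem total_succ_add_joined_pow (hr : GasketForestRecursion t g h) (n : ℕ) :
    total t g h (n + 1) + joined t g n ^ 3 = total t g h n ^ 3 := by
  simp only [total, joined, hr.t_succ, hr.g_succ, hr.h_succ]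
  ring

theorem total_succ_le (hr : GasketForestRecursion t g h) (n : ℕ) :
    total t g h (n + 1) ≤ total t g h n ^ 3 :=
  le_of_add_le_left (hr.total_succ_add_joined_pow n).le

theorem separated_pow_le_succ (hr : GasketForestRecursion t g h) (n : ℕ) :
    separated g h n ^ 3 ≤ separated g h (n + 1) := by
  have hgap : separated g h (n + 1) = separated g h n ^ 3 +
      (2 * t n ^ 2 * h n + 16 * t n * g n * h n + 14 * t n * g n ^ 2 + 14 * g n ^ 3
        + 14 * g n ^ 2 * h n + 3 * g n * h n ^ 2 + 3 * t n * h n ^ 2) := by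
    simp only [separated, hr.g_succ, hr.h_succ]
    ring
  exact hgap ▸ Nat.le_add_right _ _

theorem joined_succ_add_pow_le (hr : GasketForestRecursion t g h) (n : ℕ) :
    joined t g (n + 1) + joined t g n ^ 3 ≤ 3 * total t g h n * joined t g n ^ 2 := by
  have hgap : 3 * total t g h n * joined t g n ^ 2 = joined t g (n + 1) + joined t g n ^ 3 +
      (2 * t n ^ 3 + 6 * t n ^ 2 * g n + 8 * t n * g n ^ 2 + 4 * g n ^ 3
        + 2 * (t n + g n) ^ 2 * h n) := by
    simp only [total, joined, hr.t_succ, hr.g_succ]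
    ring
  exact hgap ▸ Nat.le_add_right _ _

theorem total_pow_le_separated_succ_add (hr : GasketForestRecursion t g h) (n : ℕ) :
    total t g h n ^ 3 ≤ separated g h (n + 1) + 3 * total t g h n * joined t g n ^ 2 := by
  have hjoined := hr.joined_succ_add_pow_le n
  have htotal := hr.total_succ_add_joined_pow n
  have hsplit := joined_add_separated t g h (n + 1)
  lia

theorem separated_pos (hr : GasketForestRecursion t g h) (h₀ : 0 < separated g h 0) (n : ℕ) :
    0 < separated g h n := by
  induction n with
  | zero => exact h₀
  | succ n ih => exact (pow_pos ih 3).trans_le (hr.separated_pow_le_succ n)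

theorem exists_tendsto_log_total (hr : GasketForestRecursion t g h)
    (h₀ : 0 < separated g h 0) :
    ∃ L : ℝ, Tendsto (fun n => Real.log (total t g h n) / 3 ^ n) atTop (𝓝 L) ∧
      ∀ n, L ∈ Set.Icc (Real.log (separated g h n) / 3 ^ n) (Real.log (total t g h n) / 3 ^ n) :=
  exists_tendsto_log_div_pow (k := 3) three_pos
    (fun n => by exact_mod_cast hr.separated_pos h₀ n)
    (fun n => by exact_mod_cast le_of_add_le_right (joined_add_separated t g h n).le)
    (fun n => by exact_mod_cast hr.total_succ_le n)
    (fun n => by exact_mod_cast hr.separated_pow_le_succ n)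

section InitialValues

theorem values_four (hr : GasketForestRecursion t g h) (ht₀ : t 0 = 3) (hg₀ : g 0 = 1)
    (hh₀ : h 0 = 1) :
    t 4 = 6753881155395148881201426976445689795306086050248316402204115 ∧
      g 4 = 560614128405294924967963949426699864403889049807377599334701549 ∧
      h 4 = 655919304210118002541330687585664958624488147511374557764105420845 := by
  have h₁ : t 1 = 63 ∧ g 1 = 41 ∧ h 1 = 93 := by
    rw [hr.t_succ 0, hr.g_succ 0, hr.h_succ 0, ht₀, hg₀, hh₀]
    norm_num
  have h₂ : t 2 = 1294083 ∧ g 2 = 2022893 ∧ h 2 = 13230013 := by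
    rw [hr.t_succ 1, hr.g_succ 1, hr.h_succ 1, h₁.1, h₁.2.1, h₁.2.2]
    norm_num
  have h₃ : t 3 = 36212372367917382063 ∧ g 3 = 215741040104979715185 ∧
      h 3 = 8012691266099095194581 := by
    rw [hr.t_succ 2, hr.g_succ 2, hr.h_succ 2, h₂.1, h₂.2.1, h₂.2.2]
    norm_num
  rw [hr.t_succ 3, hr.g_succ 3, hr.h_succ 3, h₃.1, h₃.2.1, h₃.2.2]
  norm_num

theorem total_five_mem_Icc (hr : GasketForestRecursion t g h) (ht₀ : t 0 = 3) (hg₀ : g 0 = 1)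
    (hh₀ : h 0 = 1) :
    total t g h 5 ∈ Set.Icc (284381320309 * 10 ^ 186) (284381320310 * 10 ^ 186) := by
  obtain ⟨ht₄, hg₄, hh₄⟩ := hr.values_four ht₀ hg₀ hh₀
  rw [total, hr.t_succ 4, hr.g_succ 4, hr.h_succ 4, ht₄, hg₄, hh₄]
  norm_num

theorem joined_five_le (hr : GasketForestRecursion t g h) (ht₀ : t 0 = 3) (hg₀ : g 0 = 1)
    (hh₀ : h 0 = 1) : joined t g 5 ≤ 10 ^ 192 := by
  obtain ⟨ht₄, hg₄, hh₄⟩ := hr.values_four ht₀ hg₀ hh₀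
  rw [joined, hr.t_succ 4, hr.g_succ 4, ht₄, hg₄, hh₄]
  norm_num

theorem pow_le_separated_six (hr : GasketForestRecursion t g h) (ht₀ : t 0 = 3) (hg₀ : g 0 = 1)
    (hh₀ : h 0 = 1) : (28438132030 * 10 ^ 187) ^ 3 ≤ separated g h 6 := by
  have htotal := (hr.total_five_mem_Icc ht₀ hg₀ hh₀).1
  have hjoined := hr.joined_five_le ht₀ hg₀ hh₀
  have hcube : total t g h 5 * (284381320309 * 10 ^ 186) ^ 2 ≤
      separated g h 6 + total t g h 5 * (3 * (10 ^ 192) ^ 2) :=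
    calc total t g h 5 * (284381320309 * 10 ^ 186) ^ 2
      _ ≤ total t g h 5 * total t g h 5 ^ 2 := by gcongr
      _ = total t g h 5 ^ 3 := by ring
      _ ≤ separated g h 6 + 3 * total t g h 5 * joined t g 5 ^ 2 :=
        hr.total_pow_le_separated_succ_add 5
      _ ≤ separated g h 6 + 3 * total t g h 5 * (10 ^ 192) ^ 2 := by gcongr
      _ = separated g h 6 + total t g h 5 * (3 * (10 ^ 192) ^ 2) := by ring
  linarith

theorem log_total_five_lt (hr : GasketForestRecursion t g h) (ht₀ : t 0 = 3) (hg₀ : g 0 = 1)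
    (hh₀ : h 0 = 1) : Real.log (total t g h 5) < 454.65440915214 := by
  have hmem := hr.total_five_mem_Icc ht₀ hg₀ hh₀
  have hpos : 0 < total t g h 5 := lt_of_lt_of_le (by norm_num) hmem.1
  have hle : (total t g h 5 : ℝ) ≤ 28438132031 * 10 ^ 187 := by
    exact_mod_cast hmem.2.trans (by norm_num)
  exact (Real.log_le_log (by exact_mod_cast hpos) hle).trans_lt
    log_28438132031_mul_ten_pow_187_lt

theorem lt_log_separated_six (hr : GasketForestRecursion t g h) (ht₀ : t 0 = 3) (hg₀ : g 0 = 1)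
    (hh₀ : h 0 = 1) : 3 * 454.654409148495 < Real.log (separated g h 6) := by
  have hle : ((28438132030 * 10 ^ 187) ^ 3 : ℝ) ≤ separated g h 6 := by
    exact_mod_cast hr.pow_le_separated_six ht₀ hg₀ hh₀
  calc 3 * 454.654409148495 < 3 * Real.log (28438132030 * 10 ^ 187) := by
        gcongr
        exact lt_log_28438132030_mul_ten_pow_187
    _ = Real.log ((28438132030 * 10 ^ 187) ^ 3) := by rw [Real.log_pow]; norm_cast
    _ ≤ Real.log (separated g h 6) := Real.log_le_log (by positivity) hle

end InitialValues

end GasketForestRecursion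

/-- The asymptotic growth constant `z_{SG_2} = lim 2 ln f(n) / (3 (3^n + 1))` satisfies
`1.24733719931 < z < 1.24733719932`. -/
theorem sg2_growth_constant_value
    (t g h f : ℕ → ℕ)
    (ht0 : t 0 = 3) (hg0 : g 0 = 1) (hh0 : h 0 = 1)
    (ht : ∀ n, t (n + 1) = 6 * t n ^ 2 * g n + 3 * t n * g n ^ 2)
    (hg : ∀ n, g (n + 1) = t n ^ 2 * h n + 2 * t n * g n * h n + 7 * t n * g n ^ 2
        + 4 * g n ^ 3 + g n ^ 2 * h n)
    (hh : ∀ n, h (n + 1) = 12 * t n * g n * h n + 14 * g n ^ 3 + 24 * g n ^ 2 * h n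
        + 9 * g n * h n ^ 2 + 3 * t n * h n ^ 2 + h n ^ 3)
    (hf : ∀ n, f n = t n + 3 * g n + h n) :
    ∃ z : ℝ,
      Tendsto (fun n : ℕ => 2 * Real.log (f n) / (3 * ((3 : ℝ) ^ n + 1))) atTop (nhds z) ∧
      1.24733719931 < z ∧ z < 1.24733719932 := by
  have hr : GasketForestRecursion t g h := ⟨ht, hg, hh⟩
  obtain rfl : f = GasketForestRecursion.total t g h := funext hf
  obtain ⟨L, hL, hmem⟩ :=
    hr.exists_tendsto_log_total (by simp [GasketForestRecursion.separated, hg0, hh0])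
  have hlower := hr.lt_log_separated_six ht0 hg0 hh0
  have hupper := hr.log_total_five_lt ht0 hg0 hh0
  refine ⟨2 / 3 * L, ?_, ?_, ?_⟩
  · refine ((tendsto_div_pow_add_one (by norm_num) hL).const_mul (2 / 3)).congr fun n => ?_
    exact div_mul_div_comm _ _ _ _
  · linarith [(hmem 6).1]
  · linarith [(hmem 5).2]
end

section
/- The limit z := lim_{n→∞} (5 ln F(n)) / (7·6^n + 8) exists, and for every integer m ≥ 1 it satisfies the strict bounds (5/(7·6^m)) · ln H(m) < z < (5/(7·6^m)) · ln F(m). -/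
open Filter

/-!
Cut `SG_{2,3}(n + 1)` into its six copies of `SG_{2,3}(n)`. Restricting a spanning forest to the
copies loses no edges, so `F (n + 1) ≤ F n ^ 6`. Gluing six forests that each separate the three
corners creates no cycle and keeps the corners apart, so `H n ^ 6 ≤ H (n + 1)`. Both inequalities
are strict, hence `ln H(n) / 6 ^ n` strictly increases, `ln F(n) / 6 ^ n` strictly decreases, and
the limit of the latter lies strictly between all their terms.
-/

theorem exists_tendsto_atTop_forall_lt_and_lt {ι α : Type*} [SemilatticeSup ι] [Nonempty ι]
    [NoMaxOrder ι] [ConditionallyCompleteLinearOrder α] [TopologicalSpace α] [OrderTopology α]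
    {u v : ι → α} (hu : StrictMono u) (hv : StrictAnti v) (huv : u ≤ v) :
    ∃ L, Tendsto v atTop (nhds L) ∧ ∀ n, u n < L ∧ L < v n := by
  have hle : ∀ m n, u m ≤ v n := hu.monotone.forall_le_of_antitone hv.antitone huv
  have hbdd : BddBelow (Set.range v) :=
    ⟨u (Classical.arbitrary ι), Set.forall_mem_range.2 (hle _)⟩
  refine ⟨⨅ n, v n, tendsto_atTop_ciInf hv.antitone hbdd, fun n => ?_⟩
  obtain ⟨m, hnm⟩ := exists_gt n
  exact ⟨(hu hnm).trans_le (le_ciInf (hle m)), (ciInf_le hbdd m).trans_lt (hv hnm)⟩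

section LogGrowth

variable {k : ℕ}

theorem log_pow_div_pow_succ (hk : 0 < k) (x : ℝ) (n : ℕ) :
    Real.log (x ^ k) / (k : ℝ) ^ (n + 1) = Real.log x / (k : ℝ) ^ n := by
  have hk' : (k : ℝ) ≠ 0 := by positivity
  rw [Real.log_pow, pow_succ', mul_div_mul_left _ _ hk']

theorem strictMono_log_div_pow (hk : 0 < k) {a : ℕ → ℝ} (ha : ∀ n, 0 < a n)
    (hlt : ∀ n, a n ^ k < a (n + 1)) :
    StrictMono fun n => Real.log (a n) / (k : ℝ) ^ n := by
  refine strictMono_nat_of_lt_succ fun n => ?_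
  rw [← log_pow_div_pow_succ hk]
  exact div_lt_div_of_pos_right (Real.log_lt_log (pow_pos (ha n) k) (hlt n)) (by positivity)

theorem strictAnti_log_div_pow (hk : 0 < k) {b : ℕ → ℝ} (hb : ∀ n, 0 < b n)
    (hlt : ∀ n, b (n + 1) < b n ^ k) :
    StrictAnti fun n => Real.log (b n) / (k : ℝ) ^ n := by
  refine strictAnti_nat_of_succ_lt fun n => ?_
  rw [← log_pow_div_pow_succ hk (b n)]
  exact div_lt_div_of_pos_right (Real.log_lt_log (hb (n + 1)) (hlt n)) (by positivity)

theorem exists_tendsto_log_div_pow_s11 (hk : 0 < k) {a b : ℕ → ℝ} (ha : ∀ n, 0 < a n)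
    (hab : ∀ n, a n ≤ b n) (ha_lt : ∀ n, a n ^ k < a (n + 1))
    (hb_lt : ∀ n, b (n + 1) < b n ^ k) :
    ∃ L, Tendsto (fun n => Real.log (b n) / (k : ℝ) ^ n) atTop (nhds L) ∧
      ∀ n, Real.log (a n) / (k : ℝ) ^ n < L ∧ L < Real.log (b n) / (k : ℝ) ^ n :=
  exists_tendsto_atTop_forall_lt_and_lt (strictMono_log_div_pow hk ha ha_lt)
    (strictAnti_log_div_pow hk (fun n => (ha n).trans_le (hab n)) hb_lt)
    fun n => div_le_div_of_nonneg_right (Real.log_le_log (ha n) (hab n)) (by positivity)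

end LogGrowth

theorem tendsto_div_mul_pow_add {𝕜 : Type*} [NormedField 𝕜] {x : ℕ → 𝕜} {q β L : 𝕜}
    (hq : 1 < ‖q‖) (hβ : β ≠ 0) (γ : 𝕜)
    (hx : Tendsto (fun n => x n / q ^ n) atTop (nhds L)) :
    Tendsto (fun n => x n / (β * q ^ n + γ)) atTop (nhds (L / β)) := by
  have hq0 : q ≠ 0 := norm_pos_iff.1 (one_pos.trans hq)
  have hpow : Tendsto (fun n => q⁻¹ ^ n) atTop (nhds 0) :=
    tendsto_pow_atTop_nhds_zero_of_norm_lt_one (by simpa using inv_lt_one_of_one_lt₀ hq)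
  have hden : Tendsto (fun n => β + γ * q⁻¹ ^ n) atTop (nhds β) := by
    simpa using (hpow.const_mul γ).const_add β
  refine (hx.div hden hβ).congr fun n => ?_
  have hclear : q ^ n * (β + γ * q⁻¹ ^ n) = β * q ^ n + γ := by
    rw [inv_pow]
    field_simp
  rw [Pi.div_apply, div_div, hclear]

namespace SG23

section Step

variable {R : Type*} [CommSemiring R]

/-- The recursion for `T`, the number of spanning forests of `SG_{2,3}(n)` in which the three
corners lie in one component: `T (n + 1)` in terms of `t = T n`, `g = G n`, `h = H n`. -/
def joinedStep (t g h : R) : R :=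
  142 * t ^ 3 * g ^ 3 + 18 * t ^ 4 * g * h + 45 * t ^ 3 * g ^ 2 * h + 153 * t ^ 2 * g ^ 4
    + 36 * t ^ 2 * g ^ 3 * h + 45 * t * g ^ 5 + 9 * t * g ^ 4 * h + 2 * g ^ 6

/-- The recursion for `G`, the number of spanning forests of `SG_{2,3}(n)` in which one prescribed
corner is separated from the other two, which lie in one component. -/
def splitStep (t g h : R) : R :=
  77 * t ^ 3 * g ^ 2 * h + 171 * t ^ 2 * g ^ 4 + 2 * t ^ 4 * h ^ 2 + 22 * t ^ 3 * g * h ^ 2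
    + 200 * t ^ 2 * g ^ 3 * h + 195 * t * g ^ 5 + t ^ 3 * h ^ 3 + 50 * t ^ 2 * g ^ 2 * h ^ 2
    + 169 * t * g ^ 4 * h + 56 * g ^ 6 + 3 * t ^ 2 * g * h ^ 3 + 42 * t * g ^ 3 * h ^ 2
    + 46 * g ^ 5 * h + 3 * t * g ^ 2 * h ^ 3 + 12 * g ^ 4 * h ^ 2 + g ^ 3 * h ^ 3

/-- The recursion for `H`, the number of spanning forests of `SG_{2,3}(n)` in which the three
corners lie in three different components. -/
def separatedStep (t g h : R) : R :=
  60 * t ^ 3 * g * h ^ 2 + 564 * t ^ 2 * g ^ 3 * h + 468 * t * g ^ 5 + 14 * t ^ 3 * h ^ 3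
    + 552 * t ^ 2 * g ^ 2 * h ^ 2 + 1608 * t * g ^ 4 * h + 468 * g ^ 6 + 162 * t ^ 2 * g * h ^ 3
    + 1404 * t * g ^ 3 * h ^ 2 + 1236 * g ^ 5 * h + 15 * t ^ 2 * h ^ 4 + 522 * t * g ^ 2 * h ^ 3
    + 1152 * g ^ 4 * h ^ 2 + 90 * t * g * h ^ 4 + 534 * g ^ 3 * h ^ 3 + 6 * t * h ^ 5
    + 135 * g ^ 2 * h ^ 4 + 18 * g * h ^ 5 + h ^ 6

-- The last summand on the right counts the ways to glue six forests that close up a cycle.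
theorem pow_six_eq_joinedStep_add_splitStep_add_separatedStep (t g h : R) :
    (t + 3 * g + h) ^ 6 =
      joinedStep t g h + 3 * splitStep t g h + separatedStep t g h +
        (t ^ 6 + 18 * t ^ 5 * g + 6 * t ^ 5 * h + 135 * t ^ 4 * g ^ 2 + 72 * t ^ 4 * g * h
          + 9 * t ^ 4 * h ^ 2 + 398 * t ^ 3 * g ^ 3 + 264 * t ^ 3 * g ^ 2 * h
          + 54 * t ^ 3 * g * h ^ 2 + 3 * t ^ 3 * h ^ 3 + 549 * t ^ 2 * g ^ 4
          + 420 * t ^ 2 * g ^ 3 * h + 108 * t ^ 2 * g ^ 2 * h ^ 2 + 9 * t ^ 2 * g * h ^ 3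
          + 360 * t * g ^ 5 + 306 * t * g ^ 4 * h + 90 * t * g ^ 3 * h ^ 2
          + 9 * t * g ^ 2 * h ^ 3 + 91 * g ^ 6 + 84 * g ^ 5 * h + 27 * g ^ 4 * h ^ 2
          + 3 * g ^ 3 * h ^ 3) := by
  unfold joinedStep splitStep separatedStep
  ring

variable [PartialOrder R] [IsStrictOrderedRing R] {t g h : R}

theorem joinedStep_nonneg (ht : 0 ≤ t) (hg : 0 ≤ g) (hh : 0 ≤ h) : 0 ≤ joinedStep t g h := by
  unfold joinedStep
  positivity

theorem splitStep_pos (ht : 0 ≤ t) (hg : 0 < g) (hh : 0 ≤ h) : 0 < splitStep t g h := by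
  unfold splitStep
  positivity

theorem pow_six_lt_separatedStep (ht : 0 ≤ t) (hg : 0 < g) (hh : 0 ≤ h) :
    h ^ 6 < separatedStep t g h :=
  lt_add_of_pos_left _ (by positivity)

theorem joinedStep_add_splitStep_add_separatedStep_lt_pow_six
    (ht : 0 ≤ t) (hg : 0 < g) (hh : 0 ≤ h) :
    joinedStep t g h + 3 * splitStep t g h + separatedStep t g h < (t + 3 * g + h) ^ 6 := by
  rw [pow_six_eq_joinedStep_add_splitStep_add_separatedStep]
  exact lt_add_of_pos_right _ (by positivity)

theorem orbit_nonneg_pos_pos {T G H : ℕ → R} (hT0 : 0 ≤ T 0) (hG0 : 0 < G 0) (hH0 : 0 < H 0)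
    (hT : ∀ n, T (n + 1) = joinedStep (T n) (G n) (H n))
    (hG : ∀ n, G (n + 1) = splitStep (T n) (G n) (H n))
    (hH : ∀ n, H (n + 1) = separatedStep (T n) (G n) (H n)) (n : ℕ) :
    0 ≤ T n ∧ 0 < G n ∧ 0 < H n := by
  induction n with
  | zero => exact ⟨hT0, hG0, hH0⟩
  | succ n ih =>
    obtain ⟨ht, hg, hh⟩ := ih
    rw [hT, hG, hH]
    exact ⟨joinedStep_nonneg ht hg.le hh.le, splitStep_pos ht hg hh.le,
      (pow_pos hh 6).trans (pow_six_lt_separatedStep ht hg hh.le)⟩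

end Step

end SG23

open SG23 in
theorem sg23_growth_constant_bounds_general {T G H F : ℕ → ℝ}
    (hT0 : 0 ≤ T 0) (hG0 : 0 < G 0) (hH0 : 0 < H 0)
    (hT : ∀ n, T (n + 1) = joinedStep (T n) (G n) (H n))
    (hG : ∀ n, G (n + 1) = splitStep (T n) (G n) (H n))
    (hH : ∀ n, H (n + 1) = separatedStep (T n) (G n) (H n))
    (hF : ∀ n, F n = T n + 3 * G n + H n) :
    ∃ z : ℝ,
      Tendsto (fun n : ℕ => 5 * Real.log (F n) / (7 * (6 : ℝ) ^ n + 8)) atTop (nhds z) ∧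
      ∀ m : ℕ,
        5 / (7 * (6 : ℝ) ^ m) * Real.log (H m) < z ∧
        z < 5 / (7 * (6 : ℝ) ^ m) * Real.log (F m) := by
  have hpos := orbit_nonneg_pos_pos hT0 hG0 hH0 hT hG hH
  have hHF : ∀ n, H n ≤ F n := fun n => by linarith [hF n, hpos n]
  have hH_lt : ∀ n, H n ^ 6 < H (n + 1) := fun n => by
    obtain ⟨ht, hg, hh⟩ := hpos n
    rw [hH]
    exact pow_six_lt_separatedStep ht hg hh.le
  have hF_lt : ∀ n, F (n + 1) < F n ^ 6 := fun n => by
    obtain ⟨ht, hg, hh⟩ := hpos n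
    rw [hF, hF, hT, hG, hH]
    exact joinedStep_add_splitStep_add_separatedStep_lt_pow_six ht hg hh.le
  obtain ⟨L, hL, hbounds⟩ :=
    exists_tendsto_log_div_pow_s11 (by norm_num) (fun n => (hpos n).2.2) hHF hH_lt hF_lt
  push_cast at hL hbounds
  refine ⟨5 * L / 7, tendsto_div_mul_pow_add (by norm_num) (by norm_num) 8 ?_, fun m => ?_⟩
  · simpa only [mul_div_assoc] using hL.const_mul 5
  · have hscale : ∀ x : ℝ, 5 / (7 * 6 ^ m) * x = 5 * (x / 6 ^ m) / 7 := fun x => by ring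
    rw [hscale, hscale]
    constructor <;> linarith [hbounds m]

/-- The asymptotic growth constant `z = lim 5 ln F(n) / (7·6^n + 8)` exists and satisfies
`(5/(7·6^m)) ln H(m) < z < (5/(7·6^m)) ln F(m)` for every `m ≥ 1`. -/
theorem sg23_growth_constant_bounds
    (T G H F : ℕ → ℕ)
    (hT0 : T 0 = 3) (hG0 : G 0 = 1) (hH0 : H 0 = 1)
    (hT : ∀ n, T (n + 1) =
        142 * T n ^ 3 * G n ^ 3 + 18 * T n ^ 4 * G n * H n + 45 * T n ^ 3 * G n ^ 2 * H n
        + 153 * T n ^ 2 * G n ^ 4 + 36 * T n ^ 2 * G n ^ 3 * H n + 45 * T n * G n ^ 5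
        + 9 * T n * G n ^ 4 * H n + 2 * G n ^ 6)
    (hG : ∀ n, G (n + 1) =
        77 * T n ^ 3 * G n ^ 2 * H n + 171 * T n ^ 2 * G n ^ 4 + 2 * T n ^ 4 * H n ^ 2
        + 22 * T n ^ 3 * G n * H n ^ 2 + 200 * T n ^ 2 * G n ^ 3 * H n + 195 * T n * G n ^ 5
        + T n ^ 3 * H n ^ 3 + 50 * T n ^ 2 * G n ^ 2 * H n ^ 2 + 169 * T n * G n ^ 4 * H n
        + 56 * G n ^ 6 + 3 * T n ^ 2 * G n * H n ^ 3 + 42 * T n * G n ^ 3 * H n ^ 2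
        + 46 * G n ^ 5 * H n + 3 * T n * G n ^ 2 * H n ^ 3 + 12 * G n ^ 4 * H n ^ 2
        + G n ^ 3 * H n ^ 3)
    (hH : ∀ n, H (n + 1) =
        60 * T n ^ 3 * G n * H n ^ 2 + 564 * T n ^ 2 * G n ^ 3 * H n + 468 * T n * G n ^ 5
        + 14 * T n ^ 3 * H n ^ 3 + 552 * T n ^ 2 * G n ^ 2 * H n ^ 2
        + 1608 * T n * G n ^ 4 * H n + 468 * G n ^ 6 + 162 * T n ^ 2 * G n * H n ^ 3
        + 1404 * T n * G n ^ 3 * H n ^ 2 + 1236 * G n ^ 5 * H n + 15 * T n ^ 2 * H n ^ 4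
        + 522 * T n * G n ^ 2 * H n ^ 3 + 1152 * G n ^ 4 * H n ^ 2 + 90 * T n * G n * H n ^ 4
        + 534 * G n ^ 3 * H n ^ 3 + 6 * T n * H n ^ 5 + 135 * G n ^ 2 * H n ^ 4
        + 18 * G n * H n ^ 5 + H n ^ 6)
    (hF : ∀ n, F n = T n + 3 * G n + H n) :
    ∃ z : ℝ,
      Tendsto (fun n : ℕ => 5 * Real.log (F n) / (7 * (6 : ℝ) ^ n + 8)) atTop (nhds z) ∧
      ∀ m : ℕ, 1 ≤ m →
        5 / (7 * (6 : ℝ) ^ m) * Real.log (H m) < z ∧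
        z < 5 / (7 * (6 : ℝ) ^ m) * Real.log (F m) := by
  obtain ⟨z, hz, hbounds⟩ := sg23_growth_constant_bounds_general
    (T := fun n => T n) (G := fun n => G n) (H := fun n => H n) (F := fun n => F n)
    (by simp [hT0]) (by simp [hG0]) (by simp [hH0]) (fun n => by simp [hT, SG23.joinedStep])
    (fun n => by simp [hG, SG23.splitStep]) (fun n => by simp [hH, SG23.separatedStep])
    (fun n => by simp [hF])
  exact ⟨z, hz, fun m _ => hbounds m⟩
end

section
/- Let z := lim_{n→∞} (5 ln F(n)) / (7·6^n + 8). For every integer m ≥ 1, (5/(7·6^m)) · ln F(m) − z ≤ −(1/(7·6^m)) · ln(1 − 7·((T(m)+G(m))/F(m))^3). -/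
open Filter

/-!
Choosing a spanning forest in each of the six cells of `SG_{2,3}(n+1)` gives `F(n)^6`
configurations. The cells surround three holes, and a union of forests contains a cycle only if it
goes round one of the seven nonempty sets of holes; such a cycle crosses at least three cells, each
linking two prescribed corners, which happens for a proportion `p(n) = (T(n) + G(n)) / F(n)` of the
forests. Hence `F(n+1) ≥ F(n)^6 (1 - 7 p(n)^3)`. As `p` is decreasing, `p(n)` may be replaced by
`p(m)` for `n ≥ m`, and then `(ln F(n) + ln (1 - 7 p(m)^3) / 5) / 6^n` increases in `n ≥ m` to its
limit `7 z / 5`. The logarithm is that of a positive number because `p(m) ≤ p(1) ≤ 1/2`.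
-/

open scoped Topology

section Growth

variable {u : ℕ → ℝ} {a b d r z : ℝ}

theorem tendsto_div_pow_of_tendsto_div_affine (hd : 1 < d) (ha : a ≠ 0)
    (hu : Tendsto (fun n => u n / (a * d ^ n + b)) atTop (𝓝 z)) :
    Tendsto (fun n => u n / d ^ n) atTop (𝓝 (z * a)) := by
  have hratio : Tendsto (fun n => (a * d ^ n + b) / d ^ n) atTop (𝓝 a) := by
    have hpow : Tendsto (fun n : ℕ => b / d ^ n) atTop (𝓝 0) :=
      (tendsto_pow_atTop_atTop_of_one_lt hd).const_div_atTop b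
    refine (by simpa using hpow.const_add a : Tendsto _ _ (𝓝 a)).congr fun n => ?_
    have : d ^ n ≠ 0 := by positivity
    field_simp
  refine (hu.mul hratio).congr' ?_
  filter_upwards [hratio.eventually_ne ha] with n hn
  exact div_mul_div_cancel₀ (div_ne_zero_iff.mp hn).1

theorem add_div_div_pow_le_of_tendsto {m : ℕ} (hd : 1 < d)
    (hstep : ∀ n ≥ m, d * u n + r ≤ u (n + 1))
    (hu : Tendsto (fun n => u n / d ^ n) atTop (𝓝 z)) :
    (u m + r / (d - 1)) / d ^ m ≤ z := by
  -- `-r / (d - 1)` is the fixed point of `x ↦ d * x + r`.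
  have hmono : Monotone fun k => (u (m + k) + r / (d - 1)) / d ^ (m + k) := by
    refine monotone_nat_of_le_succ fun k => ?_
    have hfix : d * (u (m + k) + r / (d - 1)) = d * u (m + k) + r + r / (d - 1) := by
      have : d - 1 ≠ 0 := by linarith
      field_simp
      ring
    rw [← add_assoc, pow_succ', ← mul_div_mul_left _ (d ^ (m + k)) (by positivity : d ≠ 0), hfix]
    gcongr
    exact hstep _ (Nat.le_add_right m k)
  have hlim : Tendsto (fun n => (u n + r / (d - 1)) / d ^ n) atTop (𝓝 z) := by
    simpa only [add_div, add_zero] using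
      hu.add ((tendsto_pow_atTop_atTop_of_one_lt hd).const_div_atTop (r / (d - 1)))
  have hshift : Tendsto (fun k => (u (m + k) + r / (d - 1)) / d ^ (m + k)) atTop (𝓝 z) :=
    hlim.comp (tendsto_add_atTop_nat m |>.congr fun k => add_comm k m)
  exact hmono.ge_of_tendsto hshift 0

end Growth

/-- The spanning forests of a gasket with three corners, counted by how the corners are distributed
over the trees: `t` forests have all corners in one tree, `g` have two prescribed corners in one
tree and the third in another, and `h` have the corners in three different trees. These are the
`T(n)`, `G(n)`, `H(n)` of the paper, with entries in a type `R` that is later an ordered ring. -/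
@[ext]
structure CornerCounts (R : Type*) where
  t : R
  g : R
  h : R

namespace CornerCounts

section Defs

variable {R : Type*} [CommSemiring R]

/-- The number of all spanning forests: by symmetry, each of the three ways of separating one
corner from the other two contributes `g`. -/
def total (x : CornerCounts R) : R := x.t + 3 * x.g + x.h

/-- The number of spanning forests in which two prescribed corners lie in the same tree. -/
def linked (x : CornerCounts R) : R := x.t + x.g

/-- The counts for the gasket glued from six copies of a gasket with counts `x` in the pattern of
`SG_{2,3}`. -/
def glue : CornerCounts R → CornerCounts R
  | ⟨t, g, h⟩ =>
    { t := 142 * t ^ 3 * g ^ 3 + 18 * t ^ 4 * g * h + 45 * t ^ 3 * g ^ 2 * h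
        + 153 * t ^ 2 * g ^ 4 + 36 * t ^ 2 * g ^ 3 * h + 45 * t * g ^ 5 + 9 * t * g ^ 4 * h
        + 2 * g ^ 6
      g := 77 * t ^ 3 * g ^ 2 * h + 171 * t ^ 2 * g ^ 4 + 2 * t ^ 4 * h ^ 2
        + 22 * t ^ 3 * g * h ^ 2 + 200 * t ^ 2 * g ^ 3 * h + 195 * t * g ^ 5 + t ^ 3 * h ^ 3
        + 50 * t ^ 2 * g ^ 2 * h ^ 2 + 169 * t * g ^ 4 * h + 56 * g ^ 6 + 3 * t ^ 2 * g * h ^ 3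
        + 42 * t * g ^ 3 * h ^ 2 + 46 * g ^ 5 * h + 3 * t * g ^ 2 * h ^ 3 + 12 * g ^ 4 * h ^ 2
        + g ^ 3 * h ^ 3
      h := 60 * t ^ 3 * g * h ^ 2 + 564 * t ^ 2 * g ^ 3 * h + 468 * t * g ^ 5
        + 14 * t ^ 3 * h ^ 3 + 552 * t ^ 2 * g ^ 2 * h ^ 2 + 1608 * t * g ^ 4 * h + 468 * g ^ 6
        + 162 * t ^ 2 * g * h ^ 3 + 1404 * t * g ^ 3 * h ^ 2 + 1236 * g ^ 5 * h
        + 15 * t ^ 2 * h ^ 4 + 522 * t * g ^ 2 * h ^ 3 + 1152 * g ^ 4 * h ^ 2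
        + 90 * t * g * h ^ 4 + 534 * g ^ 3 * h ^ 3 + 6 * t * h ^ 5 + 135 * g ^ 2 * h ^ 4
        + 18 * g * h ^ 5 + h ^ 6 }

/-- The counts for a single triangle, the stage `SG_{2,3}(0)`. -/
def triangle : CornerCounts R := ⟨3, 1, 1⟩

end Defs

section Order

variable {R : Type*} [CommRing R] [LinearOrder R] [IsStrictOrderedRing R]
  {x : CornerCounts R} {p : R}

/-- All counts are nonnegative, as they are for the counts of an actual gasket. -/
structure Nonneg (x : CornerCounts R) : Prop where
  t : 0 ≤ x.t
  g : 0 ≤ x.g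
  h : 0 ≤ x.h

theorem Nonneg.linked_nonneg (hx : x.Nonneg) : 0 ≤ x.linked :=
  add_nonneg hx.t hx.g

theorem Nonneg.total_nonneg (hx : x.Nonneg) : 0 ≤ x.total :=
  add_nonneg (add_nonneg hx.t (mul_nonneg zero_le_three hx.g)) hx.h

theorem Nonneg.glue (hx : x.Nonneg) : x.glue.Nonneg := by
  obtain ⟨t, g, h⟩ := x
  obtain ⟨ht, hg, hh⟩ : 0 ≤ t ∧ 0 ≤ g ∧ 0 ≤ h := ⟨hx.t, hx.g, hx.h⟩
  constructor <;> dsimp only [CornerCounts.glue] <;> positivity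

/-- `7` is the number of cycles of cells, and `3` the least number of cells on such a cycle. -/
theorem Nonneg.total_pow_six_le (hx : x.Nonneg) :
    x.total ^ 6 ≤ x.glue.total + 7 * x.total ^ 3 * x.linked ^ 3 := by
  obtain ⟨t, g, h⟩ := x
  obtain ⟨ht, hg, hh⟩ : 0 ≤ t ∧ 0 ≤ g ∧ 0 ≤ h := ⟨hx.t, hx.g, hx.h⟩
  rw [← sub_nonneg]
  simp only [total, linked, CornerCounts.glue]
  -- The difference is a polynomial with nonnegative coefficients.
  ring_nf
  positivity

theorem Nonneg.linked_glue_mul_total_le (hx : x.Nonneg) :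
    x.glue.linked * x.total ≤ x.linked * x.glue.total := by
  obtain ⟨t, g, h⟩ := x
  obtain ⟨ht, hg, hh⟩ : 0 ≤ t ∧ 0 ≤ g ∧ 0 ≤ h := ⟨hx.t, hx.g, hx.h⟩
  rw [← sub_nonneg]
  simp only [total, linked, CornerCounts.glue]
  ring_nf
  positivity

/-- At most the proportion `p` of the spanning forests link two prescribed corners, stated without
division. For `7 * p ^ 3 < 1` this is preserved by `glue`; nonnegativity of the counts and
positivity of their total are included as parts of that invariant. -/
structure LinkedAtMost (p : R) (x : CornerCounts R) : Prop where
  nonneg : x.Nonneg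
  total_pos : 0 < x.total
  linked_le : x.linked ≤ p * x.total

namespace LinkedAtMost

theorem total_pow_mul_le (hx : LinkedAtMost p x) :
    x.total ^ 6 * (1 - 7 * p ^ 3) ≤ x.glue.total := by
  have hpow : x.linked ^ 3 ≤ (p * x.total) ^ 3 :=
    pow_le_pow_left₀ hx.nonneg.linked_nonneg hx.linked_le 3
  have hpos := hx.total_pos
  calc x.total ^ 6 * (1 - 7 * p ^ 3)
      = x.total ^ 6 - 7 * x.total ^ 3 * (p * x.total) ^ 3 := by ring
    _ ≤ x.total ^ 6 - 7 * x.total ^ 3 * x.linked ^ 3 := by gcongr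
    _ ≤ x.glue.total := sub_le_iff_le_add.mpr hx.nonneg.total_pow_six_le

theorem glue (hp : 7 * p ^ 3 < 1) (hx : LinkedAtMost p x) : LinkedAtMost p x.glue where
  nonneg := hx.nonneg.glue
  total_pos :=
    (mul_pos (pow_pos hx.total_pos 6) (sub_pos.mpr hp)).trans_le hx.total_pow_mul_le
  linked_le := by
    have hglue : 0 ≤ x.glue.total := hx.nonneg.glue.total_nonneg
    refine le_of_mul_le_mul_right ?_ hx.total_pos
    calc x.glue.linked * x.total ≤ x.linked * x.glue.total := hx.nonneg.linked_glue_mul_total_le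
      _ ≤ p * x.total * x.glue.total := by gcongr; exact hx.linked_le
      _ = p * x.glue.total * x.total := by ring

theorem of_le {x : ℕ → CornerCounts R} {m n : ℕ} (hglue : ∀ n, x (n + 1) = (x n).glue)
    (hp : 7 * p ^ 3 < 1) (hm : LinkedAtMost p (x m)) (hmn : m ≤ n) : LinkedAtMost p (x n) := by
  induction n, hmn using Nat.le_induction with
  | base => exact hm
  | succ n _ ih => exact hglue n ▸ ih.glue hp

end LinkedAtMost

end Order

section Field

variable {K : Type*} [Field K] [LinearOrder K] {x : CornerCounts K} {p : K}

theorem linkedAtMost_linked_div_total (hx : x.Nonneg) (hpos : 0 < x.total) :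
    LinkedAtMost (x.linked / x.total) x :=
  ⟨hx, hpos, (div_mul_cancel₀ _ hpos.ne').ge⟩

variable [IsStrictOrderedRing K]

theorem LinkedAtMost.seven_mul_div_pow_lt_one (hp : 7 * p ^ 3 < 1) (hx : LinkedAtMost p x) :
    7 * (x.linked / x.total) ^ 3 < 1 := by
  have hnonneg : 0 ≤ x.linked / x.total := div_nonneg hx.nonneg.linked_nonneg hx.total_pos.le
  have hle : x.linked / x.total ≤ p := (div_le_iff₀ hx.total_pos).mpr hx.linked_le
  calc 7 * (x.linked / x.total) ^ 3 ≤ 7 * p ^ 3 := by gcongr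
    _ < 1 := hp

theorem linkedAtMost_half_glue_triangle : LinkedAtMost (1 / 2 : K) triangle.glue where
  nonneg := Nonneg.glue ⟨zero_le_three, zero_le_one, zero_le_one⟩
  total_pos := by norm_num [triangle, glue, total]
  linked_le := by norm_num [triangle, glue, linked, total]

end Field

theorem LinkedAtMost.log_total_glue {x : CornerCounts ℝ} {p : ℝ} (hp : 7 * p ^ 3 < 1)
    (hx : LinkedAtMost p x) :
    6 * Real.log x.total + Real.log (1 - 7 * p ^ 3) ≤ Real.log x.glue.total := by
  have hpow : 0 < x.total ^ 6 := pow_pos hx.total_pos 6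
  have hfactor : 0 < 1 - 7 * p ^ 3 := sub_pos.mpr hp
  calc 6 * Real.log x.total + Real.log (1 - 7 * p ^ 3)
      = Real.log (x.total ^ 6 * (1 - 7 * p ^ 3)) := by
        rw [Real.log_mul hpow.ne' hfactor.ne', Real.log_pow, Nat.cast_ofNat]
    _ ≤ Real.log x.glue.total := Real.log_le_log (mul_pos hpow hfactor) hx.total_pow_mul_le

end CornerCounts

open CornerCounts

theorem sg23_upper_bound_gap_general {x : ℕ → CornerCounts ℝ} {z : ℝ} {m : ℕ}
    (hglue : ∀ n, x (n + 1) = (x n).glue)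
    (hz : Tendsto (fun n : ℕ => 5 * Real.log (x n).total / (7 * (6 : ℝ) ^ n + 8)) atTop (𝓝 z))
    (hnonneg : (x m).Nonneg) (hpos : 0 < (x m).total)
    (hp : 7 * ((x m).linked / (x m).total) ^ 3 < 1) :
    5 / (7 * (6 : ℝ) ^ m) * Real.log (x m).total - z ≤
      -(1 / (7 * (6 : ℝ) ^ m)) * Real.log (1 - 7 * ((x m).linked / (x m).total) ^ 3) := by
  set r := Real.log (1 - 7 * ((x m).linked / (x m).total) ^ 3)
  have hlinked := linkedAtMost_linked_div_total hnonneg hpos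
  have hstep : ∀ n ≥ m,
      6 * (5 * Real.log (x n).total) + 5 * r ≤ 5 * Real.log (x (n + 1)).total := by
    intro n hn
    have := (hlinked.of_le hglue hp hn).log_total_glue hp
    rw [hglue]
    linarith
  have hlimit : (5 * Real.log (x m).total + 5 * r / (6 - 1)) / 6 ^ m ≤ z * 7 :=
    add_div_div_pow_le_of_tendsto (by norm_num) hstep
      (tendsto_div_pow_of_tendsto_div_affine (by norm_num) (by norm_num) hz)
  calc 5 / (7 * (6 : ℝ) ^ m) * Real.log (x m).total - z
      = (5 * Real.log (x m).total + 5 * r / (6 - 1)) / 6 ^ m / 7 - z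
          + -(1 / (7 * (6 : ℝ) ^ m)) * r := by ring
    _ ≤ -(1 / (7 * (6 : ℝ) ^ m)) * r := by linarith

/-- The difference between the upper bound `(5/(7·6^m)) ln F(m)` and the growth constant `z`
is at most `-(1/(7·6^m)) ln (1 - 7 ((T(m)+G(m))/F(m))^3)`. -/
theorem sg23_upper_bound_gap
    (T G H F : ℕ → ℕ)
    (hT0 : T 0 = 3) (hG0 : G 0 = 1) (hH0 : H 0 = 1)
    (hT : ∀ n, T (n + 1) =
        142 * T n ^ 3 * G n ^ 3 + 18 * T n ^ 4 * G n * H n + 45 * T n ^ 3 * G n ^ 2 * H n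
        + 153 * T n ^ 2 * G n ^ 4 + 36 * T n ^ 2 * G n ^ 3 * H n + 45 * T n * G n ^ 5
        + 9 * T n * G n ^ 4 * H n + 2 * G n ^ 6)
    (hG : ∀ n, G (n + 1) =
        77 * T n ^ 3 * G n ^ 2 * H n + 171 * T n ^ 2 * G n ^ 4 + 2 * T n ^ 4 * H n ^ 2
        + 22 * T n ^ 3 * G n * H n ^ 2 + 200 * T n ^ 2 * G n ^ 3 * H n + 195 * T n * G n ^ 5
        + T n ^ 3 * H n ^ 3 + 50 * T n ^ 2 * G n ^ 2 * H n ^ 2 + 169 * T n * G n ^ 4 * H n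
        + 56 * G n ^ 6 + 3 * T n ^ 2 * G n * H n ^ 3 + 42 * T n * G n ^ 3 * H n ^ 2
        + 46 * G n ^ 5 * H n + 3 * T n * G n ^ 2 * H n ^ 3 + 12 * G n ^ 4 * H n ^ 2
        + G n ^ 3 * H n ^ 3)
    (hH : ∀ n, H (n + 1) =
        60 * T n ^ 3 * G n * H n ^ 2 + 564 * T n ^ 2 * G n ^ 3 * H n + 468 * T n * G n ^ 5
        + 14 * T n ^ 3 * H n ^ 3 + 552 * T n ^ 2 * G n ^ 2 * H n ^ 2
        + 1608 * T n * G n ^ 4 * H n + 468 * G n ^ 6 + 162 * T n ^ 2 * G n * H n ^ 3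
        + 1404 * T n * G n ^ 3 * H n ^ 2 + 1236 * G n ^ 5 * H n + 15 * T n ^ 2 * H n ^ 4
        + 522 * T n * G n ^ 2 * H n ^ 3 + 1152 * G n ^ 4 * H n ^ 2 + 90 * T n * G n * H n ^ 4
        + 534 * G n ^ 3 * H n ^ 3 + 6 * T n * H n ^ 5 + 135 * G n ^ 2 * H n ^ 4
        + 18 * G n * H n ^ 5 + H n ^ 6)
    (hF : ∀ n, F n = T n + 3 * G n + H n)
    (z : ℝ)
    (hz : Tendsto (fun n : ℕ => 5 * Real.log (F n) / (7 * (6 : ℝ) ^ n + 8)) atTop (nhds z)) :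
    ∀ m : ℕ, 1 ≤ m →
      5 / (7 * (6 : ℝ) ^ m) * Real.log (F m) - z ≤
        -(1 / (7 * (6 : ℝ) ^ m)) *
          Real.log (1 - 7 * (((T m : ℝ) + (G m : ℝ)) / (F m : ℝ)) ^ 3) := by
  let x : ℕ → CornerCounts ℝ := fun n => ⟨T n, G n, H n⟩
  have hglue : ∀ n, x (n + 1) = (x n).glue := fun n => by
    ext <;> simp [x, glue, hT, hG, hH]
  have htotal : ∀ n, (F n : ℝ) = (x n).total := fun n => by simp [x, total, hF]
  have hhalf : (7 : ℝ) * (1 / 2) ^ 3 < 1 := by norm_num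
  have hone : LinkedAtMost (1 / 2) (x 1) := by
    have hzero : x 0 = triangle := by ext <;> simp [x, triangle, hT0, hG0, hH0]
    rw [hglue, hzero]
    exact linkedAtMost_half_glue_triangle
  intro m hm
  have hlinked := hone.of_le hglue hhalf hm
  simp only [htotal] at hz ⊢
  exact sg23_upper_bound_gap_general hglue hz hlinked.nonneg hlinked.total_pos
    (hlinked.seven_mul_div_pow_lt_one hhalf)
end
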